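/- Let n ≥ 4, let 2 ≤ r ≤ n/2, let 0 ≤ c ≤ 1/5, let α ∈ [0,1] and let δ be a real number with α - ((n-r)/r)·δ ∈ [0,1]. If δ ≤ -2c·(r/n)·α(1-α)·θ_n^(r), then c·(r/n)·(α - ((n-r)/r)δ)·(1 - α + ((n-r)/r)δ)·θ_{n-1}^(r-1) - ((n-r)/r)·δ ≥ c·α(1-α)·θ_n^(r). -/

import Mathlib

/-! The first summand of the left-hand side is nonnegative, and the second alone is large enough:
multiplying the bound on `δ` by `-((n-r)/r)` gives `-((n-r)/r)·δ ≥ 2·((n-r)/n)·c·α(1-α)·θ_n^(r)`,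
where `2·((n-r)/n) ≥ 1` because `r ≤ n/2`. -/

lemma mul_one_sub_nonneg_of_mem_Icc {R : Type*} [Ring R] [PartialOrder R] [IsOrderedRing R]
    {x : R} (hx : x ∈ Set.Icc 0 1) : 0 ≤ x * (1 - x) :=
  mul_nonneg hx.1 (sub_nonneg.2 hx.2)

section LinearOrderedField

variable {K : Type*} [Field K] [LinearOrder K] [IsStrictOrderedRing K]

lemma one_le_sub_div_mul_two_mul_div {n r : K} (hr : 0 < r) (hrn : 2 * r ≤ n) :
    1 ≤ (n - r) / r * (2 * (r / n)) := by
  have hn : 0 < n := by linarith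
  calc
    1 ≤ 2 * (n - r) / n := by rw [one_le_div hn]; linarith
    _ = (n - r) / r * (2 * (r / n)) := by field_simp

lemma le_neg_sub_div_mul_of_le_neg {n r x δ : K} (hr : 0 < r) (hrn : 2 * r ≤ n) (hx : 0 ≤ x)
    (hδ : δ ≤ -(2 * (r / n) * x)) : x ≤ -((n - r) / r * δ) := by
  have hk : 0 ≤ (n - r) / r := div_nonneg (by linarith) hr.le
  calc
    x ≤ (n - r) / r * (2 * (r / n)) * x :=
      le_mul_of_one_le_left hx (one_le_sub_div_mul_two_mul_div hr hrn)
    _ = (n - r) / r * (2 * (r / n) * x) := mul_assoc _ _ _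
    _ ≤ (n - r) / r * -δ := mul_le_mul_of_nonneg_left (le_neg_of_le_neg hδ) hk
    _ = -((n - r) / r * δ) := mul_neg _ _

/-- `θ` and `θ'` take the places of `θ_n^(r)` and `θ_{n-1}^(r-1)`. -/
theorem stmt_5_general {n r c α δ θ θ' : K} (hr : 0 < r) (hrn : 2 * r ≤ n) (hc : 0 ≤ c)
    (hα : α ∈ Set.Icc 0 1) (hαδ : α - (n - r) / r * δ ∈ Set.Icc 0 1) (hθ : 0 ≤ θ) (hθ' : 0 ≤ θ')
    (hδ : δ ≤ -(2 * c * (r / n) * (α * (1 - α)) * θ)) :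
    c * (r / n) * ((α - (n - r) / r * δ) * (1 - α + (n - r) / r * δ)) * θ' - (n - r) / r * δ
      ≥ c * (α * (1 - α)) * θ := by
  have hn : 0 ≤ n := by linarith
  have first_nonneg :
      0 ≤ c * (r / n) * ((α - (n - r) / r * δ) * (1 - α + (n - r) / r * δ)) * θ' := by
    rw [sub_add]
    have := mul_one_sub_nonneg_of_mem_Icc hαδ
    positivity
  have rhs_nonneg : 0 ≤ c * (α * (1 - α)) * θ :=
    mul_nonneg (mul_nonneg hc (mul_one_sub_nonneg_of_mem_Icc hα)) hθ
  have rhs_le : c * (α * (1 - α)) * θ ≤ -((n - r) / r * δ) :=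
    le_neg_sub_div_mul_of_le_neg hr hrn rhs_nonneg (hδ.trans_eq (by ring))
  linarith

end LinearOrderedField

/-- Claim 3.3 of the paper: if `δ ≤ -2c·(r/n)·α(1-α)·θ_n^(r)`, then
`c·(r/n)·(α-((n-r)/r)δ)(1-α+((n-r)/r)δ)·θ_{n-1}^(r-1) - ((n-r)/r)·δ ≥ c·α(1-α)·θ_n^(r)`,
where `θ_m^(k) = √(m/(k(m-k)))`. -/
theorem stmt_5 (n r : ℕ) (hn : 4 ≤ n) (hr2 : 2 ≤ r) (hrn : 2 * r ≤ n)
    (c α δ : ℝ) (hc0 : 0 ≤ c) (hc : c ≤ 1 / 5)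
    (hα : α ∈ Set.Icc (0 : ℝ) 1)
    (hαδ : α - (((n : ℝ) - r) / r) * δ ∈ Set.Icc (0 : ℝ) 1)
    (hδ : δ ≤ -(2 * c * ((r : ℝ) / n) * (α * (1 - α))
        * Real.sqrt ((n : ℝ) / ((r : ℝ) * ((n : ℝ) - r))))) :
    c * ((r : ℝ) / n) * ((α - (((n : ℝ) - r) / r) * δ) * (1 - α + (((n : ℝ) - r) / r) * δ))
        * Real.sqrt (((n : ℝ) - 1) / (((r : ℝ) - 1) * ((n : ℝ) - r)))
      - (((n : ℝ) - r) / r) * δ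
      ≥ c * (α * (1 - α)) * Real.sqrt ((n : ℝ) / ((r : ℝ) * ((n : ℝ) - r))) :=
  stmt_5_general (by positivity) (by exact_mod_cast hrn) hc0 hα hαδ
    (Real.sqrt_nonneg _) (Real.sqrt_nonneg _) hδ
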